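/- arXiv:1206.2526 — 3 statements merged into one kernel-verified Lean document; each statement's English description precedes it below -/
import Mathlib

section
/- Let x⁰ ∈ H and δ > 0, let Λ ⊆ I, and suppose x⁰ is δ-clustered sparse in Φ with respect to Λ and Φ*x⁰ ∈ ℓ¹(I). Let κ = κ(Λ, H_M) and assume κ < 1/2. If x⋆ ∈ H satisfies P_K x⋆ = P_K x⁰, Φ*x⋆ ∈ ℓ¹(I), and ‖Φ*x⋆‖₁ ≤ ‖Φ*x‖₁ for every x ∈ H with P_K x = P_K x⁰ and Φ*x ∈ ℓ¹(I) (i.e. x⋆ solves the analysis-side ℓ¹ minimization inpainting problem), then ‖x⋆ − x⁰‖ ≤ 2δ/(1 − 2κ). -/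
noncomputable section

open scoped InnerProductSpace

/-- The ℓ¹ norm of a coefficient sequence restricted (by coordinatewise multiplication with the
indicator of `Λ`) to an index set `Λ`. -/
def l1On {I : Type*} (Λ : Set I) (c : I → ℂ) : ℝ :=
  ∑' i, Set.indicator Λ (fun i => ‖c i‖) i

/-- The ℓ¹ norm of a coefficient sequence. -/
def l1 {I : Type*} (c : I → ℂ) : ℝ := ∑' i, ‖c i‖

/-- The analysis coefficients of `x` with respect to the family `Φ`. -/
def analysisCoeff {H : Type*} [NormedAddCommGroup H] [InnerProductSpace ℂ H]
    {I : Type*} (Φ : I → H) (x : H) : I → ℂ :=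
  fun i => ⟪x, Φ i⟫_ℂ

/-- The concentration `κ(Λ, H_M)` of the index set `Λ` on the subspace `M`:
the supremum of `‖1_Λ Φ* f‖₁ / ‖Φ* f‖₁` over nonzero `f ∈ M` with `Φ* f ∈ ℓ¹`. -/
def concentration {H : Type*} [NormedAddCommGroup H] [InnerProductSpace ℂ H]
    {I : Type*} (Φ : I → H) (Λ : Set I) (M : Submodule ℂ H) : ℝ :=
  sSup {r : ℝ | ∃ f : H, f ∈ M ∧ f ≠ 0 ∧ (Summable fun i => ‖⟪f, Φ i⟫_ℂ‖) ∧
    r = l1On Λ (analysisCoeff Φ f) / l1 (analysisCoeff Φ f)}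

/-- Error bound for analysis-side ℓ¹ minimization inpainting (noiseless case):
if `x⁰` is `δ`-clustered sparse with respect to `Λ` and the concentration `κ` of `Λ` on the
missing subspace `H_M` satisfies `κ < 1/2`, then any minimizer `x⋆` of the analysis ℓ¹ norm
subject to the data constraint `P_K x⋆ = P_K x⁰` satisfies `‖x⋆ − x⁰‖ ≤ 2δ/(1 − 2κ)`. -/
theorem l1_inpainting_error_noiseless
    {H : Type*} [NormedAddCommGroup H] [InnerProductSpace ℂ H] [CompleteSpace H]
    {I : Type*} [Countable I] (Φ : I → H)
    (hPars : ∀ x : H, HasSum (fun i => ‖⟪x, Φ i⟫_ℂ‖ ^ 2) (‖x‖ ^ 2))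
    (M : Submodule ℂ H) [CompleteSpace M]
    (x0 : H) (δ : ℝ) (hδ : 0 < δ) (Λ : Set I)
    (hx0sum : Summable fun i => ‖⟪x0, Φ i⟫_ℂ‖)
    (hsparse : l1On Λᶜ (analysisCoeff Φ x0) ≤ δ)
    (κ : ℝ) (hκdef : κ = concentration Φ Λ M) (hκ : κ < 1 / 2)
    (xstar : H)
    (hfeas : (Submodule.orthogonalProjectionOnto Mᗮ xstar : H) = (Submodule.orthogonalProjectionOnto Mᗮ x0 : H))
    (hstarsum : Summable fun i => ‖⟪xstar, Φ i⟫_ℂ‖)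
    (hmin : ∀ x : H, (Submodule.orthogonalProjectionOnto Mᗮ x : H) = (Submodule.orthogonalProjectionOnto Mᗮ x0 : H) →
      (Summable fun i => ‖⟪x, Φ i⟫_ℂ‖) →
      l1 (analysisCoeff Φ xstar) ≤ l1 (analysisCoeff Φ x)) :
    ‖xstar - x0‖ ≤ 2 * δ / (1 - 2 * κ) := by
  have hpos : 0 < 1 - 2 * κ := by linarith
  obtain ⟨h, hh⟩ : ∃ h, h = xstar - x0 := ⟨_, rfl⟩
  rw [← hh]
  by_cases h0 : h = 0
  · rw [h0, norm_zero]
    positivity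
  have hM : h ∈ M := by
    have h1 : Submodule.orthogonalProjectionOnto Mᗮ h = 0 := by
      rw [hh, map_sub, sub_eq_zero]
      exact Subtype.ext hfeas
    have h2 := (Submodule.orthogonalProjectionOnto_eq_zero_iff (K := Mᗮ)).1 h1
    rwa [Submodule.orthogonal_orthogonal] at h2
  have hi : ∀ i, ⟪h, Φ i⟫_ℂ = ⟪xstar, Φ i⟫_ℂ - ⟪x0, Φ i⟫_ℂ := fun i => by
    rw [hh, inner_sub_left]
  have hsum : Summable fun i => ‖⟪h, Φ i⟫_ℂ‖ := by
    refine Summable.of_nonneg_of_le (fun i => norm_nonneg _) (fun i => ?_) (hstarsum.add hx0sum)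
    rw [hi]
    exact norm_sub_le _ _
  have hN0 : 0 ≤ l1 (analysisCoeff Φ h) := tsum_nonneg fun i => norm_nonneg _
  have hnorm : ‖h‖ ≤ l1 (analysisCoeff Φ h) := by
    refine le_of_sq_le_sq ?_ hN0
    rw [pow_two (l1 _)]
    have hs : HasSum (fun i => ‖⟪h, Φ i⟫_ℂ‖ * l1 (analysisCoeff Φ h))
        (l1 (analysisCoeff Φ h) * l1 (analysisCoeff Φ h)) := hsum.hasSum.mul_right _
    refine hasSum_le (fun i => ?_) (hPars h) hs
    rw [pow_two]
    exact mul_le_mul_of_nonneg_left (hsum.le_tsum i fun j _ => norm_nonneg _) (norm_nonneg _)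
  have hNpos : 0 < l1 (analysisCoeff Φ h) := lt_of_lt_of_le (norm_pos_iff.2 h0) hnorm
  have hconc : l1On Λ (analysisCoeff Φ h) ≤ κ * l1 (analysisCoeff Φ h) := by
    rw [← div_le_iff₀ hNpos, hκdef]
    refine le_csSup ⟨1, ?_⟩ ⟨h, hM, h0, hsum, rfl⟩
    rintro r ⟨f, -, -, hf, rfl⟩
    refine div_le_one_of_le₀ ?_ (tsum_nonneg fun i => norm_nonneg _)
    exact (hf.indicator Λ).tsum_le_tsum
      (fun i => Set.indicator_le_self' (fun _ _ => norm_nonneg _) i) hf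
  have hstar := hmin x0 rfl hx0sum
  have key : l1 (analysisCoeff Φ h) ≤ l1 (analysisCoeff Φ xstar) - l1 (analysisCoeff Φ x0)
      + 2 * l1On Λ (analysisCoeff Φ h) + 2 * l1On Λᶜ (analysisCoeff Φ x0) := by
    refine hasSum_le (fun i => ?_) hsum.hasSum
      (((hstarsum.hasSum.sub hx0sum.hasSum).add ((hsum.indicator Λ).hasSum.mul_left 2)).add
        ((hx0sum.indicator Λᶜ).hasSum.mul_left 2))
    have t1 := norm_sub_le ⟪xstar, Φ i⟫_ℂ ⟪x0, Φ i⟫_ℂ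
    have t2 := norm_sub_norm_le ⟪x0, Φ i⟫_ℂ ⟪xstar, Φ i⟫_ℂ
    rw [norm_sub_rev] at t2
    rw [← hi] at t1 t2
    by_cases hΛ : i ∈ Λ
    · simp [hΛ]
      linarith
    · simp [hΛ]
      linarith
  refine hnorm.trans ?_
  rw [le_div_iff₀ hpos]
  linarith
end
end

section
/- Let x⁰ ∈ H and δ > 0, let Λ ⊆ I, and suppose x⁰ is δ-clustered sparse in Φ with respect to Λ and Φ*x⁰ ∈ ℓ¹(I). Let n ∈ H_K satisfy ‖Φ*n‖₁ ≤ ε and set x̃ = P_K x⁰ + n. Let κ = κ(Λ, H_M) and assume κ < 1/2. If x̃⋆ ∈ H satisfies P_K x̃⋆ = x̃, Φ*x̃⋆ ∈ ℓ¹(I), and ‖Φ*x̃⋆‖₁ ≤ ‖Φ*x‖₁ for every x ∈ H with P_K x = x̃ and Φ*x ∈ ℓ¹(I), then ‖x̃⋆ − x⁰‖ ≤ (2δ + (3 + 2κ)ε)/(1 − 2κ). -/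
noncomputable section

open scoped InnerProductSpace

/-- The Hilbert norm is dominated by the analysis ℓ¹ norm for a Parseval frame. -/
theorem norm_le_l1_aux
    {H : Type*} [NormedAddCommGroup H] [InnerProductSpace ℂ H]
    {I : Type*} (Φ : I → H)
    (hPars : ∀ x : H, HasSum (fun i => ‖⟪x, Φ i⟫_ℂ‖ ^ 2) (‖x‖ ^ 2))
    (x : H) (hs : Summable fun i => ‖⟪x, Φ i⟫_ℂ‖) :
    ‖x‖ ≤ ∑' i, ‖⟪x, Φ i⟫_ℂ‖ := by
  have h0 : 0 ≤ ∑' i, ‖⟪x, Φ i⟫_ℂ‖ := tsum_nonneg fun i => norm_nonneg _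
  have h1 := hasSum_le (fun i => by
    have h2 : ‖⟪x, Φ i⟫_ℂ‖ ≤ ∑' i, ‖⟪x, Φ i⟫_ℂ‖ := hs.le_tsum i fun j _ => norm_nonneg _
    show ‖⟪x, Φ i⟫_ℂ‖ ^ 2 ≤ (∑' i, ‖⟪x, Φ i⟫_ℂ‖) * ‖⟪x, Φ i⟫_ℂ‖
    rw [sq]
    exact mul_le_mul_of_nonneg_right h2 (norm_nonneg _)) (hPars x)
    (hs.hasSum.mul_left (∑' i, ‖⟪x, Φ i⟫_ℂ‖))
  exact abs_le_of_sq_le_sq' (by rw [sq (∑' i, _)]; exact h1) h0 |>.2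

/-- Error bound for analysis-side ℓ¹ minimization inpainting with noise: if `x⁰` is
`δ`-clustered sparse with respect to `Λ`, the data is `x̃ = P_K x⁰ + n` with `‖Φ* n‖₁ ≤ ε`,
and the concentration `κ` of `Λ` on the missing subspace satisfies `κ < 1/2`, then any
minimizer `x̃⋆` of the analysis ℓ¹ norm subject to `P_K x̃⋆ = x̃` satisfies
`‖x̃⋆ − x⁰‖ ≤ (2δ + (3 + 2κ)ε)/(1 − 2κ)`. -/
theorem l1_inpainting_error_noisy
    {H : Type*} [NormedAddCommGroup H] [InnerProductSpace ℂ H] [CompleteSpace H]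
    {I : Type*} [Countable I] (Φ : I → H)
    (hPars : ∀ x : H, HasSum (fun i => ‖⟪x, Φ i⟫_ℂ‖ ^ 2) (‖x‖ ^ 2))
    (M : Submodule ℂ H) [CompleteSpace M]
    (x0 : H) (δ : ℝ) (hδ : 0 < δ) (Λ : Set I)
    (hx0sum : Summable fun i => ‖⟪x0, Φ i⟫_ℂ‖)
    (hsparse : l1On Λᶜ (analysisCoeff Φ x0) ≤ δ)
    (ε : ℝ) (n : H) (hn : n ∈ Mᗮ)
    (hnsum : Summable fun i => ‖⟪n, Φ i⟫_ℂ‖)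
    (hnε : l1 (analysisCoeff Φ n) ≤ ε)
    (xt : H) (hxt : xt = (Submodule.orthogonalProjectionOnto Mᗮ x0 : H) + n)
    (κ : ℝ) (hκdef : κ = concentration Φ Λ M) (hκ : κ < 1 / 2)
    (xstar : H)
    (hfeas : (Submodule.orthogonalProjectionOnto Mᗮ xstar : H) = xt)
    (hstarsum : Summable fun i => ‖⟪xstar, Φ i⟫_ℂ‖)
    (hmin : ∀ x : H, (Submodule.orthogonalProjectionOnto Mᗮ x : H) = xt →
      (Summable fun i => ‖⟪x, Φ i⟫_ℂ‖) →
      l1 (analysisCoeff Φ xstar) ≤ l1 (analysisCoeff Φ x)) :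
    ‖xstar - x0‖ ≤ (2 * δ + (3 + 2 * κ) * ε) / (1 - 2 * κ) := by
  obtain ⟨f, hf⟩ : ∃ f, f = xstar - x0 - n := ⟨_, rfl⟩
  have hnP : (Submodule.orthogonalProjectionOnto Mᗮ n : H) = n :=
    Submodule.starProjection_eq_self_iff.2 hn
  have hfM : f ∈ M := by
    rw [← Submodule.orthogonal_orthogonal M]
    rw [← Submodule.starProjection_apply_eq_zero_iff (K := Mᗮ)]
    rw [Submodule.starProjection_apply, hf, map_sub, map_sub]
    push_cast
    rw [hfeas, hxt, hnP]
    abel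
  have hysum : Summable fun i => ‖⟪x0 + n, Φ i⟫_ℂ‖ := by
    refine Summable.of_nonneg_of_le (fun _ => norm_nonneg _) (fun i => ?_) (hx0sum.add hnsum)
    rw [inner_add_left]
    exact norm_add_le _ _
  have hfi : ∀ i, ⟪f, Φ i⟫_ℂ = ⟪xstar, Φ i⟫_ℂ - ⟪x0 + n, Φ i⟫_ℂ := by
    intro i
    rw [hf, ← inner_sub_left, sub_sub]
  have hfsum : Summable fun i => ‖⟪f, Φ i⟫_ℂ‖ := by
    refine Summable.of_nonneg_of_le (fun _ => norm_nonneg _) (fun i => ?_) (hstarsum.add hysum)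
    rw [hfi]
    exact norm_sub_le _ _
  have hle := hmin (x0 + n) (by rw [map_add]; push_cast; rw [hnP, hxt]) hysum
  have hratio : ∀ g : H, (Summable fun i => ‖⟪g, Φ i⟫_ℂ‖) →
      l1On Λ (analysisCoeff Φ g) ≤ l1 (analysisCoeff Φ g) := by
    intro g hg
    exact Summable.tsum_le_tsum
      (fun i => Set.indicator_le_self' (fun _ _ => norm_nonneg _) i) (hg.indicator Λ) hg
  have hl1nn : ∀ g : H, 0 ≤ l1 (analysisCoeff Φ g) := fun g => tsum_nonneg fun i => norm_nonneg _
  have hl1onnn : ∀ g : H, 0 ≤ l1On Λ (analysisCoeff Φ g) := fun g =>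
    tsum_nonneg fun i => Set.indicator_nonneg (fun _ _ => norm_nonneg _) i
  have hκ0 : 0 ≤ κ := by
    rw [hκdef]
    apply Real.sSup_nonneg
    rintro r ⟨g, _, _, _, rfl⟩
    exact div_nonneg (hl1onnn g) (hl1nn g)
  have hnf := norm_le_l1_aux Φ hPars f hfsum
  have hnn := norm_le_l1_aux Φ hPars n hnsum
  have hconc : l1On Λ (analysisCoeff Φ f) ≤ κ * l1 (analysisCoeff Φ f) := by
    by_cases hf0 : f = 0
    · have h1 : l1 (analysisCoeff Φ f) = 0 := by simp [l1, analysisCoeff, hf0]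
      have h2 := hratio f hfsum
      rw [h1] at h2 ⊢
      simpa using h2
    · have hpos : 0 < l1 (analysisCoeff Φ f) := lt_of_lt_of_le (norm_pos_iff.2 hf0) hnf
      rw [← div_le_iff₀ hpos, hκdef]
      refine le_csSup ⟨1, ?_⟩ ⟨f, hfM, hf0, hfsum, rfl⟩
      rintro r ⟨g, _, _, hg, rfl⟩
      exact div_le_one_of_le₀ (hratio g hg) (hl1nn g)
  have hkey : l1 (analysisCoeff Φ f) + l1 (analysisCoeff Φ (x0 + n)) ≤
      2 * l1On Λ (analysisCoeff Φ f) + 2 * l1On Λᶜ (analysisCoeff Φ x0)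
        + 2 * l1 (analysisCoeff Φ n) + l1 (analysisCoeff Φ xstar) := by
    refine hasSum_le (fun i => ?_) (hfsum.hasSum.add hysum.hasSum)
      (((((hfsum.indicator Λ).hasSum.mul_left 2).add
        ((hx0sum.indicator Λᶜ).hasSum.mul_left 2)).add (hnsum.hasSum.mul_left 2)).add
        hstarsum.hasSum)
    have hn0 := norm_nonneg ⟪n, Φ i⟫_ℂ
    have ha : ‖⟪x0 + n, Φ i⟫_ℂ‖ ≤ ‖⟪x0, Φ i⟫_ℂ‖ + ‖⟪n, Φ i⟫_ℂ‖ := by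
      rw [inner_add_left]
      exact norm_add_le _ _
    have hb : ‖⟪f, Φ i⟫_ℂ‖ ≤ ‖⟪xstar, Φ i⟫_ℂ‖ + ‖⟪x0 + n, Φ i⟫_ℂ‖ := by
      rw [hfi]
      exact norm_sub_le _ _
    have hc : ‖⟪x0 + n, Φ i⟫_ℂ‖ ≤ ‖⟪xstar, Φ i⟫_ℂ‖ + ‖⟪f, Φ i⟫_ℂ‖ := by
      have h3 : ⟪x0 + n, Φ i⟫_ℂ = ⟪xstar, Φ i⟫_ℂ - ⟪f, Φ i⟫_ℂ := by rw [hfi]; ring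
      rw [h3]
      exact norm_sub_le _ _
    by_cases hi : i ∈ Λ
    · have hi2 : i ∉ Λᶜ := fun h => h hi
      rw [Set.indicator_of_mem hi, Set.indicator_of_notMem hi2]
      linarith
    · have hi2 : i ∈ Λᶜ := hi
      rw [Set.indicator_of_notMem hi, Set.indicator_of_mem hi2]
      linarith
  have htri : ‖xstar - x0‖ ≤ ‖f‖ + ‖n‖ := by
    have h4 : xstar - x0 = f + n := by rw [hf]; abel
    rw [h4]
    exact norm_add_le _ _
  change ‖f‖ ≤ l1 (analysisCoeff Φ f) at hnf
  change ‖n‖ ≤ l1 (analysisCoeff Φ n) at hnn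
  have hε : 0 ≤ ε := (hl1nn n).trans hnε
  rw [le_div_iff₀ (by linarith)]
  have h5 : ‖xstar - x0‖ ≤ l1 (analysisCoeff Φ f) + ε := by linarith
  have h6 : ‖xstar - x0‖ * (1 - 2 * κ) ≤ (l1 (analysisCoeff Φ f) + ε) * (1 - 2 * κ) :=
    mul_le_mul_of_nonneg_right h5 (by linarith)
  have h7 := mul_nonneg hκ0 hε
  linarith
end
end

section
/- (Ray integral bound.) Let N ≥ 2 be a real number, let x₀ ∈ ℝ, and let y₀ ≥ 0. Define R_N(x₀, y₀) = ∫_{y₀}^{∞} (1 + x₀² + α²)^{−N/2} dα. Then R_N(x₀, y₀) ≤ π · (1 + x₀²)^{−1/2} · (1 + x₀² + y₀²)^{(2−N)/2}. -/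
noncomputable section

open MeasureTheory Real

/-- Ray integral bound: for `N ≥ 2`, `x₀ ∈ ℝ` and `y₀ ≥ 0`,
`R_N(x₀, y₀) = ∫_{y₀}^∞ ⟨|(x₀, α)|⟩^{−N} dα ≤ π ⟨|x₀|⟩^{−1} ⟨|(x₀, y₀)|⟩^{2−N}`. -/
theorem ray_integral_bound (N x₀ y₀ : ℝ) (hN : 2 ≤ N) (hy₀ : 0 ≤ y₀) :
    ∫ α in Set.Ioi y₀, (1 + x₀ ^ 2 + α ^ 2) ^ (-(N / 2)) ≤
      π * (1 + x₀ ^ 2) ^ (-(1 / 2) : ℝ) * (1 + x₀ ^ 2 + y₀ ^ 2) ^ ((2 - N) / 2) := by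
  have hA : 0 < 1 + x₀ ^ 2 := by positivity
  obtain ⟨c, hc, hcA⟩ : ∃ c : ℝ, 0 < c ∧ 1 + x₀ ^ 2 = c ^ 2 :=
    ⟨√(1 + x₀ ^ 2), Real.sqrt_pos.2 hA, (Real.sq_sqrt hA.le).symm⟩
  have hpow : (1 + x₀ ^ 2) ^ (-(1 / 2) : ℝ) = c⁻¹ := by
    rw [Real.rpow_neg hA.le, ← Real.sqrt_eq_rpow, hcA, Real.sqrt_sq hc.le]
  rw [hpow, hcA]
  set K : ℝ := (c ^ 2 + y₀ ^ 2) ^ ((2 - N) / 2) with hK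
  have hK0 : 0 ≤ K := by positivity
  let g : ℝ → ℝ := fun α => K * ((c ^ 2)⁻¹ * (1 + (α / c) ^ 2)⁻¹)
  have hg0 : ∀ α, 0 ≤ g α := fun α => by positivity
  have hgi : Integrable g :=
    ((integrable_inv_one_add_sq.comp_div hc.ne').const_mul _).const_mul _
  have hgv : ∫ α, g α = π * c⁻¹ * K := by
    simp only [g]
    rw [integral_const_mul, integral_const_mul,
      Measure.integral_comp_div (fun x : ℝ => (1 + x ^ 2)⁻¹) c, integral_univ_inv_one_add_sq,
      abs_of_pos hc, smul_eq_mul]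
    field_simp
  rw [← hgv]
  refine le_trans ?_ (setIntegral_le_integral (s := Set.Ioi y₀) hgi (Filter.Eventually.of_forall hg0))
  refine integral_mono_of_nonneg (Filter.Eventually.of_forall fun α => ?_) hgi.integrableOn ?_
  · show 0 ≤ (c ^ 2 + α ^ 2) ^ (-(N / 2))
    positivity
  · filter_upwards [ae_restrict_mem measurableSet_Ioi] with α hα
    have hα' : y₀ < α := hα
    have hB : 0 < c ^ 2 + α ^ 2 := by positivity
    have e1 : (c ^ 2 + α ^ 2) ^ (-(N / 2)) =
        (c ^ 2 + α ^ 2) ^ ((2 - N) / 2) * (c ^ 2 + α ^ 2)⁻¹ := by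
      rw [← Real.rpow_neg_one, ← Real.rpow_add hB]
      congr 1
      ring
    have e2 : (c ^ 2)⁻¹ * (1 + (α / c) ^ 2)⁻¹ = (c ^ 2 + α ^ 2)⁻¹ := by
      rw [← mul_inv]
      congr 1
      field_simp
    simp only [g]
    rw [e1, e2]
    refine mul_le_mul_of_nonneg_right ?_ (by positivity)
    refine Real.rpow_le_rpow_of_nonpos (by positivity) ?_ (by linarith)
    gcongr
end
end
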